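/- arXiv:2010.00277 — 2 statements merged into one kernel-verified Lean document; each statement's English description precedes it below -/
import Mathlib

section
/- Let n ≥ 3 and let L ⊆ Sⁿ be a regular 3-dimensional linear subspace. Then every nonzero matrix in L has rank at least n − 1 if and only if the adjugate matrices {adj(M) : M ∈ L} span all of Sⁿ (equivalently, the linear span of the reciprocal variety L⁻¹ is the whole ambient space Sⁿ). -/
open Matrix

noncomputable section

abbrev Mat (n : ℕ) := Matrix (Fin n) (Fin n) ℂ

/-- The space `Sⁿ` of symmetric `n × n` complex matrices, as a submodule. -/
def symmSub (n : ℕ) : Submodule ℂ (Mat n) where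
  carrier := {X : Mat n | X.IsSymm}
  add_mem' := fun ha hb => ha.add hb
  zero_mem' := Matrix.isSymm_zero
  smul_mem' := fun c _ hX => hX.smul c

/-!
Both directions concern the symmetric matrices `S` with `tr (S * adj M) = 0` for all `M ∈ L`.

Suppose the rank bound holds, and fix an invertible `X ∈ L`. For every `M ∈ L` outside `K X` the
pencil `M - μ X` has corank at most one, so the commutant of `X⁻¹ M` consists of polynomials in
`X⁻¹ M`. Such polynomials are self-adjoint for the form `X`, hence the derivative
`Z ↦ M Z + Zᵀ M` of congruence is injective on the Lie algebra `𝔬(X)` of skew-adjoint matrices.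
Dually, a symmetric matrix trace-orthogonal to the image of `𝔬(X)` is of the form
`p(X⁻¹ M) X⁻¹`, and `S` is orthogonal to all of these because `adj (X + s M)` is; so `S` lies in
this image. Taking `M = B + t C` with `X, B, C` independent in `L` gives a pencil of linear maps
on `𝔬(X)` all of whose members are injective and have `S` in their range. By Kronecker's theory
of pencils such an `S` vanishes.

Conversely, if the adjugates span, then `S ↦ tr (S * adj (∑ₖ Xₖ Bₖ))`, with `Bₖ` a basis of `L`,
embeds the symmetric matrices into the forms of degree `n - 1` in three variables. Both spaces
have dimension `(n + 1).choose 2`, while a nonzero `M ∈ L` of rank less than `n - 1` has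
`adj M = 0` and would force the image into the proper subspace of forms vanishing at a point.
-/

open Module

section Pencil

theorem exists_comp_eq_of_range_le_range {K U V W : Type*} [Field K] [AddCommGroup U] [Module K U]
    [AddCommGroup V] [Module K V] [AddCommGroup W] [Module K W] {f : V →ₗ[K] W} {g : U →ₗ[K] W}
    (h : LinearMap.range g ≤ LinearMap.range f) : ∃ φ : U →ₗ[K] V, f ∘ₗ φ = g := by
  obtain ⟨φ, hφ⟩ := projective_lifting_property f.rangeRestrict
    (g.codRestrict (LinearMap.range f) fun u ↦ h ⟨u, rfl⟩) f.surjective_rangeRestrict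
  exact ⟨φ, LinearMap.ext fun u ↦ congrArg Subtype.val (LinearMap.congr_fun hφ u)⟩

variable {K V W : Type*} [Field K] [IsAlgClosed K] [AddCommGroup V] [Module K V]
  [FiniteDimensional K V] [AddCommGroup W] [Module K W]

theorem exists_notMem_range_of_linearIndependent [Nontrivial V] {f g : V →ₗ[K] W}
    (hfg : ∀ v ≠ 0, LinearIndependent K ![f v, g v]) : ∃ v, g v ∉ LinearMap.range f := by
  by_contra! hg
  obtain ⟨φ, hφ⟩ := exists_comp_eq_of_range_le_range (LinearMap.range_le_iff_comap.mpr
    (Submodule.eq_top_iff'.mpr hg))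
  obtain ⟨μ, hμ⟩ := End.exists_eigenvalue φ
  obtain ⟨v, hv⟩ := hμ.exists_hasEigenvector
  have relation : μ • f v + (-1 : K) • g v = 0 := by
    rw [← hφ, LinearMap.comp_apply, hv.apply_eq_smul, map_smul, neg_one_smul, add_neg_cancel]
  simpa using (LinearIndependent.pair_iff.mp (hfg v hv.2) _ _ relation).2

theorem exists_proper_subpencil [Nontrivial V] {f g : V →ₗ[K] W}
    (hfg : ∀ v ≠ 0, LinearIndependent K ![f v, g v]) :
    ∃ (V₀ : Submodule K V) (φ : V₀ →ₗ[K] V), V₀ ≠ ⊤ ∧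
      (∀ v ≠ 0, LinearIndependent K ![V₀.subtype v, φ v]) ∧
      ∀ t : K, t ≠ 0 → ∀ v, f v ∈ LinearMap.range (f + t • g) →
        v ∈ LinearMap.range (V₀.subtype + t • φ) := by
  let V₀ : Submodule K V := (LinearMap.range f).comap g
  obtain ⟨φ, f_comp_φ⟩ := exists_comp_eq_of_range_le_range (f := f) (g := g ∘ₗ V₀.subtype) <| by
    rintro _ ⟨v, rfl⟩
    exact v.2
  have f_φ (v : V₀) : f (φ v) = g v := LinearMap.congr_fun f_comp_φ v
  refine ⟨V₀, φ, fun h ↦ ?_, fun v hv ↦ ?_, fun t ht v ⟨u, hu⟩ ↦ ?_⟩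
  · obtain ⟨v, hv⟩ := exists_notMem_range_of_linearIndependent hfg
    exact hv (h.ge (Submodule.mem_top (x := v)))
  · refine LinearIndependent.pair_iff.mpr fun a b hab ↦
      LinearIndependent.pair_iff.mp (hfg v (by simpa using hv)) a b ?_
    rw [← map_zero f, ← hab, map_add, map_smul, map_smul, f_φ, V₀.subtype_apply]
  -- `f v = f u + t • g u` places `u` in `V₀`, and cancelling `f` leaves `v = u + t • φ u`.
  · have smul_g_u : t • g u = f (v - u) := by
      rw [map_sub, ← hu, LinearMap.add_apply, LinearMap.smul_apply, add_sub_cancel_left]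
    have u_mem : u ∈ V₀ :=
      (Submodule.smul_mem_iff _ ht).mp ⟨v - u, by rw [← smul_g_u, map_smul]⟩
    have f_injective : Function.Injective f := (injective_iff_map_eq_zero f).mpr fun v hv ↦ by
      by_contra hv_ne
      exact (hfg v hv_ne).ne_zero 0 hv
    refine ⟨⟨u, u_mem⟩, f_injective ?_⟩
    rw [LinearMap.add_apply, LinearMap.smul_apply, V₀.subtype_apply, map_add, map_smul, f_φ,
      smul_g_u, ← map_add, add_sub_cancel]

-- The induction replaces `W` by `V`, so the two spaces share a universe.
theorem eq_zero_of_forall_mem_range_add_smul.{u} {V W : Type u} [AddCommGroup V] [Module K V]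
    [FiniteDimensional K V] [AddCommGroup W] [Module K W] {f g : V →ₗ[K] W}
    (hfg : ∀ v ≠ 0, LinearIndependent K ![f v, g v]) {T : Set K} (hT : T.Infinite) {w : W}
    (hw : ∀ t ∈ T, w ∈ LinearMap.range (f + t • g)) : w = 0 := by
  induction hd : finrank K V using Nat.strong_induction_on generalizing V W T with
  | _ d ih =>
  subst hd
  obtain ⟨t₀, ht₀⟩ := hT.nonempty
  obtain ⟨v₀, rfl⟩ := hw t₀ ht₀
  rcases subsingleton_or_nontrivial V with _ | _
  · rw [Subsingleton.elim v₀ 0, map_zero]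
  have shifted_independent : ∀ v ≠ 0, LinearIndependent K ![(f + t₀ • g) v, g v] :=
    fun v hv ↦ by simpa using hfg v hv
  obtain ⟨V₀, φ, V₀_ne_top, hφ, mem_range⟩ := exists_proper_subpencil shifted_independent
  have v₀_mem : ∀ u ∈ (· - t₀) '' (T \ {t₀}), v₀ ∈ LinearMap.range (V₀.subtype + u • φ) := by
    rintro _ ⟨t, ⟨ht, ht_ne⟩, rfl⟩
    refine mem_range _ (sub_ne_zero.mpr ht_ne) v₀ ?_
    rw [add_assoc, ← add_smul, add_sub_cancel]
    exact hw t ht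
  have shifted_infinite : ((· - t₀) '' (T \ {t₀})).Infinite :=
    (hT.sdiff (Set.finite_singleton t₀)).image sub_left_injective.injOn
  rw [ih _ (Submodule.finrank_lt V₀_ne_top) hφ shifted_infinite v₀_mem rfl, map_zero]

end Pencil

section Commutant

open Polynomial

variable {K V : Type*} [Field K] [AddCommGroup V] [Module K V]

theorem coe_aeval_restrict_apply {T : End K V} {W : Submodule K V} (hT : ∀ w ∈ W, T w ∈ W)
    (p : K[X]) (w : W) : (aeval (T.restrict hT) p w : V) = aeval T p w := by
  induction p using Polynomial.induction_on' generalizing w with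
  | add p q hp hq => simp only [map_add, LinearMap.add_apply, Submodule.coe_add, hp, hq]
  | monomial k a => simp only [aeval_monomial, End.mul_apply, algebraMap_end_apply,
      Submodule.coe_smul, End.pow_restrict k hT, LinearMap.coe_restrict_apply]

variable [FiniteDimensional K V]

theorem exists_aeval_ne_zero_sub_mul_eq_zero {T : End K V} {μ : K} (hμ : T.HasEigenvalue μ) :
    ∃ q : K[X], aeval T q ≠ 0 ∧ (T - μ • 1) * aeval T q = 0 := by
  obtain ⟨q, hq⟩ := dvd_iff_isRoot.mpr (End.isRoot_of_hasEigenvalue hμ)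
  have minpoly_ne_zero := minpoly.ne_zero (Algebra.IsIntegral.isIntegral (R := K) T)
  refine ⟨q, fun hq_zero ↦ ?_, ?_⟩
  · have q_ne_zero : q ≠ 0 := right_ne_zero_of_mul (hq ▸ minpoly_ne_zero)
    have degree_le := natDegree_le_of_dvd (minpoly.dvd K T hq_zero) q_ne_zero
    rw [hq, natDegree_mul (X_sub_C_ne_zero μ) q_ne_zero, natDegree_X_sub_C] at degree_le
    lia
  · simpa [hq, Algebra.algebraMap_eq_smul_one] using minpoly.aeval K T

theorem exists_eq_smul_of_mul_eq_zero {N D F : End K V}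
    (hN : finrank K (LinearMap.ker N) ≤ 1) (hF : F ≠ 0) (hNF : N * F = 0) (hFN : F * N = 0)
    (hND : N * D = 0) (hDN : D * N = 0) : ∃ c : K, D = c • F := by
  obtain ⟨v, hv⟩ : ∃ v, F v ≠ 0 := by
    by_contra! h
    exact hF (LinearMap.ext h)
  have F_v_mem : F v ∈ LinearMap.ker N := LinearMap.congr_fun hNF v
  have D_v_mem : D v ∈ LinearMap.ker N := LinearMap.congr_fun hND v
  obtain ⟨c, hc⟩ : ∃ c : K, c • F v = D v := by
    have ker_pos : 0 < finrank K (LinearMap.ker N) :=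
      Submodule.one_le_finrank_iff.mpr ((Submodule.ne_bot_iff _).mpr ⟨_, F_v_mem, hv⟩)
    obtain ⟨c, hc⟩ := (finrank_eq_one_iff_of_nonzero' (K := K) (⟨F v, F_v_mem⟩ : LinearMap.ker N)
      (by simpa using hv)).mp (by lia) ⟨D v, D_v_mem⟩
    exact ⟨c, congrArg Subtype.val hc⟩
  have range_lt : LinearMap.range N < LinearMap.ker (D - c • F) := by
    refine SetLike.lt_iff_le_and_exists.mpr ⟨?_, v, by simp [hc], ?_⟩
    · rw [LinearMap.range_le_ker_iff, LinearMap.sub_comp, LinearMap.smul_comp]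
      rw [← End.mul_eq_comp, ← End.mul_eq_comp, hDN, hFN, smul_zero, sub_zero]
    · rintro ⟨x, rfl⟩
      exact hv (LinearMap.congr_fun hFN x)
  have finrank_lt := Submodule.finrank_lt_finrank_of_lt range_lt
  have ker_eq_top : LinearMap.ker (D - c • F) = ⊤ := Submodule.eq_top_of_finrank_eq <| by
    have := N.finrank_range_add_finrank_ker
    have := (LinearMap.ker (D - c • F)).finrank_le
    lia
  exact ⟨c, sub_eq_zero.mp (LinearMap.ker_eq_top.mp ker_eq_top)⟩

theorem exists_aeval_eq_of_commute [IsAlgClosed K] {T Z : End K V}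
    (hT : ∀ μ, finrank K (T.eigenspace μ) ≤ 1) (hZ : Commute T Z) :
    ∃ p : K[X], aeval T p = Z := by
  induction hd : finrank K V using Nat.strong_induction_on generalizing V with
  | _ d ih =>
  subst hd
  rcases subsingleton_or_nontrivial V with _ | _
  · exact ⟨0, Subsingleton.elim _ _⟩
  obtain ⟨μ, hμ⟩ := End.exists_eigenvalue T
  let N : End K V := T - μ • 1
  have ker_N : LinearMap.ker N = T.eigenspace μ := End.eigenspace_def.symm
  have finrank_ker_N : finrank K (LinearMap.ker N) ≤ 1 := ker_N ▸ hT μ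
  have N_T : Commute N T := (Commute.refl T).sub_left ((Commute.one_left T).smul_left μ)
  have N_Z : Commute N Z := hZ.sub_left ((Commute.one_left Z).smul_left μ)
  have N_aeval (p : K[X]) : Commute N (aeval T p) := by
    have aeval_X_sub_C : aeval T (X - C μ) = N := by simp [N, Algebra.algebraMap_eq_smul_one]
    exact aeval_X_sub_C ▸ (Commute.all (X - C μ) p).map (aeval T)
  have range_invariant {A : End K V} (hA : Commute N A) :
      ∀ w ∈ LinearMap.range N, A w ∈ LinearMap.range N := by
    rintro _ ⟨v, rfl⟩
    exact ⟨A v, LinearMap.congr_fun hA v⟩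
  obtain ⟨p, hp⟩ : ∃ p : K[X],
      aeval (T.restrict (range_invariant N_T)) p = Z.restrict (range_invariant N_Z) := by
    refine ih _ ?_ (fun ν ↦ ?_) ?_ rfl
    · have := N.finrank_range_add_finrank_ker
      have : 0 < finrank K (LinearMap.ker N) := Submodule.one_le_finrank_iff.mpr (ker_N ▸ hμ)
      lia
    · rw [← Submodule.finrank_map_subtype_eq]
      exact (Submodule.finrank_mono (End.eigenspace_restrict_le_eigenspace T _ ν)).trans (hT ν)
    · ext w
      exact LinearMap.congr_fun hZ.eq (w : V)
  -- `Z - p(T)` kills the range of `N` and maps into its kernel, as does `q(T)`.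
  obtain ⟨q, hq, N_q⟩ := exists_aeval_ne_zero_sub_mul_eq_zero hμ
  have D_N : (Z - aeval T p) * N = 0 := by
    ext v
    have := congrArg Subtype.val (LinearMap.congr_fun hp ⟨N v, LinearMap.mem_range_self N v⟩)
    rw [coe_aeval_restrict_apply] at this
    simpa [sub_eq_zero] using this.symm
  obtain ⟨c, hc⟩ := exists_eq_smul_of_mul_eq_zero finrank_ker_N hq N_q
    ((N_aeval q).eq ▸ N_q) ((N_Z.sub_right (N_aeval p)).eq.trans D_N) D_N
  exact ⟨p + c • q, by rw [map_add, map_smul, ← hc, add_sub_cancel]⟩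

theorem finrank_eigenspace_toLinAlgEquiv' {ι : Type*} [Fintype ι] [DecidableEq ι]
    (N : Matrix ι ι K) (μ : K) :
    finrank K (End.eigenspace (toLinAlgEquiv' N) μ) = Fintype.card ι - (N - μ • 1).rank := by
  have toLin_sub : toLinAlgEquiv' N - μ • 1 = mulVecLin (N - μ • 1) := by
    rw [← map_one toLinAlgEquiv', ← map_smul, ← map_sub]
    rfl
  have rank_add_nullity := (mulVecLin (N - μ • 1)).finrank_range_add_finrank_ker
  rw [finrank_fintype_fun_eq_card] at rank_add_nullity
  rw [End.eigenspace_def, toLin_sub, rank]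
  lia

theorem exists_aeval_eq_of_commute_of_card_sub_one_le_rank [IsAlgClosed K]
    {ι : Type*} [Fintype ι] [DecidableEq ι] {N Z : Matrix ι ι K}
    (hN : ∀ μ : K, Fintype.card ι - 1 ≤ (N - μ • 1).rank) (hZ : Commute N Z) :
    ∃ p : K[X], aeval N p = Z := by
  have finrank_le (μ : K) : finrank K (End.eigenspace (toLinAlgEquiv' N) μ) ≤ 1 := by
    have := hN μ
    rw [finrank_eigenspace_toLinAlgEquiv']
    lia
  obtain ⟨p, hp⟩ := exists_aeval_eq_of_commute finrank_le (hZ.map toLinAlgEquiv')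
  exact ⟨p, toLinAlgEquiv'.injective (by rw [← hp, aeval_algHom_apply])⟩

end Commutant

section Trace

open Polynomial

variable {K ι : Type*} [Field K] [Fintype ι]

theorem exists_trace_mul_eq (φ : Matrix ι ι K →ₗ[K] K) :
    ∃ W : Matrix ι ι K, ∀ Y, φ Y = (W * Y).trace := by
  classical
  refine ⟨of fun i j ↦ φ (single j i 1), fun Y ↦ ?_⟩
  conv_lhs => rw [matrix_eq_sum_single Y]
  simp only [map_sum, trace, diag_apply, mul_apply, of_apply]
  rw [Finset.sum_comm]
  refine Finset.sum_congr rfl fun i _ ↦ Finset.sum_congr rfl fun j _ ↦ ?_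
  rw [mul_comm, ← smul_eq_mul, ← map_smul, smul_single, smul_eq_mul, mul_one]

theorem exists_isSymm_trace_mul_ne_zero [NeZero (2 : K)] {p : Submodule K (Matrix ι ι K)}
    (hp : ∀ Y ∈ p, Y.IsSymm) {S : Matrix ι ι K} (hS : S.IsSymm) (hSp : S ∉ p) :
    ∃ D : Matrix ι ι K, D.IsSymm ∧ (D * S).trace ≠ 0 ∧ ∀ Y ∈ p, (D * Y).trace = 0 := by
  obtain ⟨φ, hφS, hφp⟩ := Submodule.exists_le_ker_of_notMem hSp
  obtain ⟨W, hW⟩ := exists_trace_mul_eq φ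
  have trace_add_transpose {Y : Matrix ι ι K} (hY : Y.IsSymm) :
      ((W + Wᵀ) * Y).trace = 2 * φ Y := by
    have trace_transpose : (Wᵀ * Y).trace = (W * Y).trace := by
      rw [← trace_transpose_mul, transpose_transpose, hY.eq]
    rw [add_mul, trace_add, trace_transpose, ← hW, two_mul]
  refine ⟨W + Wᵀ, isSymm_add_transpose_self W, ?_, fun Y hY ↦ ?_⟩
  · rw [trace_add_transpose hS]
    exact mul_ne_zero two_ne_zero hφS
  · rw [trace_add_transpose (hp Y hY), LinearMap.mem_ker.mp (hφp hY), mul_zero]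

theorem isSymm_of_forall_trace_mul_eq_zero {Q : Matrix ι ι K}
    (hQ : ∀ A : Matrix ι ι K, Aᵀ = -A → (Q * A).trace = 0) : Q.IsSymm := by
  classical
  ext i j
  have := hQ (single i j 1 - single j i 1) (by simp)
  simpa [mul_sub, sub_eq_zero, trace_mul_single, eq_comm] using this

variable [DecidableEq ι]

theorem eval_trace_mul_adjugate_one_add_X_smul (W N : Matrix ι ι K) (s : K) :
    (W.map C * adjugate (1 + (X : K[X]) • N.map C)).trace.eval s =
      (W * adjugate (1 + s • N)).trace := by
  rw [← coe_evalRingHom, AddMonoidHom.map_trace]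
  have map_C (A : Matrix ι ι K) : (evalRingHom s).mapMatrix (A.map C) = A := by ext; simp
  have map_X_smul : (evalRingHom s).mapMatrix ((X : K[X]) • N.map C) = s • N := by
    ext
    simpa using mul_comm _ _
  rw [← RingHom.mapMatrix_apply, map_mul, RingHom.map_adjugate, map_add, map_one, map_C,
    map_X_smul]

theorem trace_mul_aeval_eq_zero [Infinite K] {W N : Matrix ι ι K}
    (h : ∀ s : K, (W * adjugate (1 + s • N)).trace = 0) (p : K[X]) :
    (W * aeval N p).trace = 0 := by
  suffices ∀ k, (W * N ^ k).trace = 0 by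
    rw [aeval_eq_sum_range, Finset.mul_sum, trace_sum]
    refine Finset.sum_eq_zero fun k _ ↦ ?_
    rw [mul_smul_comm, trace_smul, this, smul_zero]
  intro k
  induction k generalizing W with
  | zero => simpa using h 0
  | succ k ih =>
    rw [pow_succ', ← mul_assoc]
    refine ih fun s ↦ ?_
    have trace_W : W.trace = 0 := by simpa using h 0
    have smul_trace_eq_zero (s : K) : s * (W * N * adjugate (1 + s • N)).trace = 0 := by
      calc s * (W * N * adjugate (1 + s • N)).trace
          = (W * (s • N) * adjugate (1 + s • N)).trace := by
            rw [mul_smul_comm, smul_mul_assoc, trace_smul, smul_eq_mul]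
        _ = (W * ((1 + s • N) * adjugate (1 + s • N))).trace
              - (W * adjugate (1 + s • N)).trace := by
            rw [← trace_sub, ← mul_sub, ← sub_one_mul, add_sub_cancel_left, mul_assoc]
        _ = 0 := by
            rw [h, mul_adjugate, mul_smul_comm, mul_one, trace_smul, trace_W, smul_zero, sub_zero]
    -- Cancelling the factor `s` in `K[X]` covers the value `s = 0`.
    have X_mul_eq_zero :
        X * ((W * N).map C * adjugate (1 + (X : K[X]) • N.map C)).trace = 0 := by
      refine Polynomial.funext fun s ↦ ?_
      rw [eval_mul, eval_X, eval_trace_mul_adjugate_one_add_X_smul, smul_trace_eq_zero, eval_zero]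
    rw [← eval_trace_mul_adjugate_one_add_X_smul,
      (mul_eq_zero_iff_left X_ne_zero).mp X_mul_eq_zero, eval_zero]

end Trace

section Congruence

open Polynomial

variable {K ι : Type*} [Field K] [Fintype ι]

/-- The derivative `Z ↦ M * Z + Zᵀ * M` at the identity of the congruence action
`P ↦ Pᵀ * M * P`. -/
def congruenceDeriv (M : Matrix ι ι K) : Matrix ι ι K →ₗ[K] Matrix ι ι K where
  toFun Z := M * Z + Zᵀ * M
  map_add' Z₁ Z₂ := by
    rw [mul_add, transpose_add, add_mul, add_add_add_comm]
  map_smul' c Z := by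
    rw [mul_smul_comm, transpose_smul, smul_mul_assoc, smul_add, RingHom.id_apply]

theorem congruenceDeriv_apply (M Z : Matrix ι ι K) :
    congruenceDeriv M Z = M * Z + Zᵀ * M := rfl

theorem congruenceDeriv_add (M₁ M₂ : Matrix ι ι K) :
    congruenceDeriv (M₁ + M₂) = congruenceDeriv M₁ + congruenceDeriv M₂ := by
  ext1 Z
  simp only [LinearMap.add_apply, congruenceDeriv_apply, add_mul, mul_add, add_add_add_comm]

theorem congruenceDeriv_smul (c : K) (M : Matrix ι ι K) :
    congruenceDeriv (c • M) = c • congruenceDeriv M := by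
  ext1 Z
  simp only [LinearMap.smul_apply, congruenceDeriv_apply, smul_mul_assoc, mul_smul_comm, smul_add]

theorem isSymm_congruenceDeriv {M : Matrix ι ι K} (hM : M.IsSymm) (Z : Matrix ι ι K) :
    (congruenceDeriv M Z).IsSymm := by
  rw [congruenceDeriv_apply, IsSymm, transpose_add, transpose_mul, transpose_mul,
    transpose_transpose, hM.eq, add_comm]

theorem trace_mul_congruenceDeriv {M D : Matrix ι ι K} (hM : M.IsSymm) (hD : D.IsSymm)
    (Z : Matrix ι ι K) : (D * congruenceDeriv M Z).trace = 2 * (D * M * Z).trace := by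
  have trace_transpose : (D * (Zᵀ * M)).trace = (D * M * Z).trace := by
    rw [← trace_transpose, transpose_mul, transpose_mul, transpose_transpose, hM.eq, hD.eq,
      trace_mul_comm, mul_assoc]
  rw [congruenceDeriv_apply, mul_add, trace_add, trace_transpose, ← mul_assoc, two_mul]

variable [DecidableEq ι] {X M : Matrix ι ι K}

theorem isSelfAdjoint_aeval {N : Matrix ι ι K} (hN : X.IsSelfAdjoint N) (p : K[X]) :
    X.IsSelfAdjoint (aeval N p) := by
  have semiconj : SemiconjBy X N Nᵀ := hN.symm
  rw [Matrix.IsSelfAdjoint, Matrix.IsAdjointPair]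
  induction p using Polynomial.induction_on' with
  | add p q hp hq => rw [map_add, transpose_add, add_mul, hp, hq, mul_add]
  | monomial k a =>
    rw [aeval_monomial, ← Algebra.smul_def, transpose_smul, transpose_pow, smul_mul_assoc,
      mul_smul_comm, (semiconj.pow_right k).eq]

theorem isSelfAdjoint_inv_mul (hX : IsUnit X.det) (hXs : X.IsSymm) (hM : M.IsSymm) :
    X.IsSelfAdjoint (X⁻¹ * M) := by
  rw [Matrix.IsSelfAdjoint, Matrix.IsAdjointPair, transpose_mul, transpose_nonsing_inv, hXs.eq,
    hM.eq, nonsing_inv_mul_cancel_right _ _ hX, mul_nonsing_inv_cancel_left _ _ hX]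

theorem mem_skewAdjointMatricesSubmodule_iff_transpose_mul {Z : Matrix ι ι K} :
    Z ∈ skewAdjointMatricesSubmodule X ↔ Zᵀ * X = -(X * Z) := by
  rw [mem_skewAdjointMatricesSubmodule, Matrix.IsSkewAdjoint, Matrix.IsAdjointPair, mul_neg]

theorem exists_aeval_inv_mul_eq_of_commute [IsAlgClosed K] (hX : IsUnit X.det)
    (hM : ∀ μ : K, Fintype.card ι - 1 ≤ (M - μ • X).rank) {Z : Matrix ι ι K}
    (hZ : Commute (X⁻¹ * M) Z) : ∃ p : K[X], aeval (X⁻¹ * M) p = Z := by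
  refine exists_aeval_eq_of_commute_of_card_sub_one_le_rank (fun μ ↦ ?_) hZ
  have : X⁻¹ * M - μ • 1 = X⁻¹ * (M - μ • X) := by
    rw [mul_sub, mul_smul_comm, nonsing_inv_mul _ hX]
  rw [this, rank_mul_eq_right_of_isUnit_det _ _ (isUnit_nonsing_inv_det _ hX)]
  exact hM μ

theorem trace_aeval_inv_mul_mul_inv_mul_eq_zero [Infinite K] (hX : IsUnit X.det)
    {S : Matrix ι ι K} (hS : ∀ s : K, (S * adjugate (X + s • M)).trace = 0) (p : K[X]) :
    (aeval (X⁻¹ * M) p * X⁻¹ * S).trace = 0 := by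
  have adjugate_X_add (s : K) :
      adjugate (X + s • M) = adjugate (1 + s • (X⁻¹ * M)) * adjugate X := by
    rw [← adjugate_mul_distrib, mul_add, mul_one, mul_smul_comm, mul_nonsing_inv_cancel_left _ _ hX]
  have trace_eq_zero := trace_mul_aeval_eq_zero (W := adjugate X * S) (N := X⁻¹ * M) (fun s ↦ by
    rw [mul_assoc, trace_mul_comm, mul_assoc, ← adjugate_X_add, hS]) p
  rw [mul_assoc, trace_mul_comm]
  generalize aeval (X⁻¹ * M) p = A at trace_eq_zero ⊢
  rw [inv_def, smul_mul_assoc, smul_mul_assoc, trace_smul,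
    trace_eq_zero, smul_zero]

variable [IsAlgClosed K] [NeZero (2 : K)]

theorem eq_zero_of_congruenceDeriv_eq_zero (hX : IsUnit X.det) (hXs : X.IsSymm) (hMs : M.IsSymm)
    (hM : ∀ μ : K, Fintype.card ι - 1 ≤ (M - μ • X).rank) {Z : Matrix ι ι K}
    (hZ : Z ∈ skewAdjointMatricesSubmodule X) (hMZ : congruenceDeriv M Z = 0) : Z = 0 := by
  have skew : Zᵀ * X = -(X * Z) := mem_skewAdjointMatricesSubmodule_iff_transpose_mul.mp hZ
  have commute : Commute (X⁻¹ * M) Z :=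
    calc X⁻¹ * M * Z = -(X⁻¹ * (Zᵀ * M)) := by
          rw [mul_assoc, eq_neg_of_add_eq_zero_left hMZ, mul_neg]
      _ = -(X⁻¹ * (Zᵀ * X * (X⁻¹ * M))) := by
          rw [mul_assoc Zᵀ, mul_nonsing_inv_cancel_left _ _ hX]
      _ = Z * (X⁻¹ * M) := by
          rw [skew, neg_mul, mul_neg, neg_neg, mul_assoc X, nonsing_inv_mul_cancel_left _ _ hX]
  obtain ⟨p, hp⟩ := exists_aeval_inv_mul_eq_of_commute hX hM commute
  have selfAdjoint : Zᵀ * X = X * Z := hp ▸ isSelfAdjoint_aeval (isSelfAdjoint_inv_mul hX hXs hMs) p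
  have X_mul_Z : X * Z = 0 := by
    have two_smul_eq_zero : (2 : K) • (X * Z) = 0 := by
      rw [two_smul, add_eq_zero_iff_eq_neg, ← skew, selfAdjoint]
    exact (smul_eq_zero_iff_right two_ne_zero).mp two_smul_eq_zero
  rw [← nonsing_inv_mul_cancel_left X Z hX, X_mul_Z, mul_zero]

theorem mem_map_congruenceDeriv (hX : IsUnit X.det) (hXs : X.IsSymm) (hMs : M.IsSymm)
    (hM : ∀ μ : K, Fintype.card ι - 1 ≤ (M - μ • X).rank) {S : Matrix ι ι K} (hS : S.IsSymm)
    (hSadj : ∀ s : K, (S * adjugate (X + s • M)).trace = 0) :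
    S ∈ (skewAdjointMatricesSubmodule X).map (congruenceDeriv M) := by
  have image_isSymm :
      ∀ Y ∈ (skewAdjointMatricesSubmodule X).map (congruenceDeriv M), Y.IsSymm := by
    rintro _ ⟨Z, -, rfl⟩
    exact isSymm_congruenceDeriv hMs Z
  by_contra hSrange
  obtain ⟨D, hD, trace_D_S, trace_D⟩ := exists_isSymm_trace_mul_ne_zero image_isSymm hS hSrange
  have symm : (D * M * X⁻¹).IsSymm := isSymm_of_forall_trace_mul_eq_zero fun A hA ↦ by
    have skew : X⁻¹ * A ∈ skewAdjointMatricesSubmodule X := by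
      rw [mem_skewAdjointMatricesSubmodule_iff_transpose_mul, transpose_mul,
        transpose_nonsing_inv, hXs.eq, nonsing_inv_mul_cancel_right _ _ hX,
        mul_nonsing_inv_cancel_left _ _ hX, hA]
    have := trace_D _ ⟨_, skew, rfl⟩
    rw [trace_mul_congruenceDeriv hMs hD] at this
    rw [mul_assoc]
    exact (mul_eq_zero_iff_left two_ne_zero).mp this
  have commute : Commute (X⁻¹ * M) (D * X) := by
    have D_comm : X⁻¹ * (M * D) = D * M * X⁻¹ := by
      rw [← symm.eq, transpose_mul, transpose_mul, transpose_nonsing_inv, hXs.eq, hMs.eq, hD.eq]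
    calc X⁻¹ * M * (D * X) = X⁻¹ * (M * D) * X := by simp only [mul_assoc]
      _ = D * M := by rw [D_comm, nonsing_inv_mul_cancel_right _ _ hX]
      _ = D * X * (X⁻¹ * M) := by rw [mul_assoc, mul_nonsing_inv_cancel_left _ _ hX]
  obtain ⟨p, hp⟩ := exists_aeval_inv_mul_eq_of_commute hX hM commute
  refine trace_D_S ?_
  rw [← trace_aeval_inv_mul_mul_inv_mul_eq_zero hX hSadj p, hp, mul_nonsing_inv_cancel_right _ _ hX]

theorem eq_zero_of_forall_trace_mul_adjugate_add_smul_eq_zero {B C : Matrix ι ι K}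
    (hX : IsUnit X.det) (hXs : X.IsSymm) (hB : B.IsSymm) (hC : C.IsSymm)
    (hrank : ∀ s t : K, s ≠ 0 ∨ t ≠ 0 → ∀ μ : K,
      Fintype.card ι - 1 ≤ (s • B + t • C - μ • X).rank)
    {S : Matrix ι ι K} (hS : S.IsSymm)
    (hSadj : ∀ s t : K, (S * adjugate (X + s • (B + t • C))).trace = 0) : S = 0 := by
  let f := (congruenceDeriv B).domRestrict (skewAdjointMatricesSubmodule X)
  let g := (congruenceDeriv C).domRestrict (skewAdjointMatricesSubmodule X)
  have independent : ∀ Z ≠ 0, LinearIndependent K ![f Z, g Z] := fun Z hZ ↦ by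
    refine LinearIndependent.pair_iff.mpr fun s t hst ↦ ?_
    have deriv_eq_zero : congruenceDeriv (s • B + t • C) Z = 0 := by
      rw [congruenceDeriv_add, congruenceDeriv_smul, congruenceDeriv_smul]
      exact hst
    by_contra hst_ne
    exact hZ (Subtype.ext (eq_zero_of_congruenceDeriv_eq_zero hX hXs ((hB.smul s).add (hC.smul t))
      (hrank s t (by tauto)) Z.2 deriv_eq_zero))
  refine eq_zero_of_forall_mem_range_add_smul independent Set.infinite_univ fun t _ ↦ ?_
  obtain ⟨Z, hZ, rfl⟩ := mem_map_congruenceDeriv hX hXs (hB.add (hC.smul t))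
    (by simpa using hrank 1 t (.inl one_ne_zero)) hS (hSadj · t)
  refine ⟨⟨Z, hZ⟩, ?_⟩
  rw [congruenceDeriv_add, congruenceDeriv_smul]
  rfl

theorem eq_zero_of_forall_trace_mul_adjugate_eq_zero {L : Submodule K (Matrix ι ι K)}
    (hL : ∀ M ∈ L, M.IsSymm) (hreg : ∃ X ∈ L, IsUnit X.det) (hdim : 3 ≤ finrank K L)
    (hrank : ∀ M ∈ L, M ≠ 0 → Fintype.card ι - 1 ≤ M.rank) {S : Matrix ι ι K} (hS : S.IsSymm)
    (hSadj : ∀ M ∈ L, (S * adjugate M).trace = 0) : S = 0 := by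
  obtain ⟨X, hXL, hX⟩ := hreg
  have : Nontrivial L := nontrivial_of_finrank_pos (R := K) (by lia)
  have : Nontrivial (Matrix ι ι K) := L.subtype_injective.nontrivial
  have X_ne_zero : (⟨X, hXL⟩ : L) ≠ 0 := fun h ↦
    ((isUnit_iff_isUnit_det X).mpr hX).ne_zero (congrArg Subtype.val h)
  obtain ⟨⟨B, hB⟩, hXB⟩ :=
    exists_linearIndependent_pair_of_one_lt_finrank (R := K) (by lia) X_ne_zero
  obtain ⟨⟨C, hC⟩, hCXB⟩ := exists_linearIndependent_cons_of_lt_finrank hXB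
    (show 2 < finrank K L by lia)
  refine eq_zero_of_forall_trace_mul_adjugate_add_smul_eq_zero hX (hL X hXL) (hL B hB) (hL C hC)
    (fun s t hst μ ↦ hrank _ ?_ fun h ↦ ?_) hS (fun s t ↦ hSadj _ ?_)
  · exact sub_mem (add_mem (L.smul_mem s hB) (L.smul_mem t hC)) (L.smul_mem μ hXL)
  · have relation : t • C + -μ • X + s • B = 0 := by
      rw [← h]
      module
    have coeff_eq_zero := Fintype.linearIndependent_iff.mp hCXB ![t, -μ, s] <| Subtype.ext <| by
      rw [Fin.sum_univ_three]
      exact relation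
    exact hst.elim (· (coeff_eq_zero 2)) (· (coeff_eq_zero 0))
  · exact add_mem hXL (L.smul_mem s (add_mem hB (L.smul_mem t hC)))

end Congruence

section SymmetricMatrices

variable (K ι : Type*) [Field K]

/-- The space of symmetric matrices over a field, with rows and columns indexed by any type. -/
def symmetricMatrices : Submodule K (Matrix ι ι K) where
  carrier := {X | X.IsSymm}
  add_mem' hX hY := hX.add hY
  zero_mem' := isSymm_zero
  smul_mem' c _ hX := hX.smul c

/-- A symmetric matrix as a function on unordered pairs of indices, which gives the dimension of
the space of symmetric matrices. -/
def symmetricMatricesEquiv : symmetricMatrices K ι ≃ₗ[K] (Sym2 ι → K) where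
  toFun M := fun e ↦ e.lift ⟨fun i j ↦ M.1 i j, fun i j ↦ M.2.apply j i⟩
  invFun g := ⟨of fun i j ↦ g s(i, j), IsSymm.ext fun i j ↦ congrArg g Sym2.eq_swap⟩
  map_add' M N := by ext ⟨i, j⟩; rfl
  map_smul' c M := by ext ⟨i, j⟩; rfl
  left_inv M := rfl
  right_inv g := by ext ⟨i, j⟩; rfl

theorem finrank_symmetricMatrices [Fintype ι] :
    finrank K (symmetricMatrices K ι) = (Fintype.card ι + 1).choose 2 := by
  classical
  rw [(symmetricMatricesEquiv K ι).finrank_eq, finrank_fintype_fun_eq_card, Sym2.card]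

end SymmetricMatrices

section GenericMatrix

open MvPolynomial

variable {R m n σ : Type*} [CommSemiring R] [Fintype σ]

/-- The matrix of linear forms `∑ₖ Xₖ Bₖ` parametrizing the span of the matrices `Bₖ`. -/
def genericMatrix (B : σ → Matrix m n R) : Matrix m n (MvPolynomial σ R) :=
  ∑ k, (X k : MvPolynomial σ R) • (B k).map C

theorem isHomogeneous_genericMatrix (B : σ → Matrix m n R) (i : m) (j : n) :
    (genericMatrix B i j).IsHomogeneous 1 := by
  rw [genericMatrix, Matrix.sum_apply]
  exact IsHomogeneous.sum _ _ _ fun k _ ↦ (isHomogeneous_X R k).mul (isHomogeneous_C σ (B k i j))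

theorem map_aeval_genericMatrix (B : σ → Matrix m n R) (x : σ → R) :
    (genericMatrix B).map (aeval (R := R) x) = ∑ k, x k • B k := by
  ext i j
  simp [genericMatrix, Matrix.sum_apply]

end GenericMatrix

section Adjugate

open MvPolynomial

variable {R K ι σ : Type*} [CommRing R] [Field K] [Fintype ι] [DecidableEq ι]

theorem adjugate_eq_zero_of_rank_lt {M : Matrix ι ι K} (hM : M.rank < Fintype.card ι - 1) :
    adjugate M = 0 := by
  ext j i
  rw [adjugate_apply, Matrix.zero_apply]
  by_contra h
  let rowsNe : {k // k ≠ i} → ι := Subtype.val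
  have independent : LinearIndependent K (M.submatrix rowsNe id).row := by
    have row_eq : (M.submatrix rowsNe id).row = (M.updateRow i (Pi.single j 1)).row ∘ rowsNe :=
      funext fun k ↦ (updateRow_ne (M := M) k.2).symm
    rw [row_eq]
    exact (linearIndependent_rows_of_det_ne_zero h).comp _ Subtype.val_injective
  have rank_le := M.rank_submatrix_le rowsNe id
  rw [independent.rank_matrix, Fintype.card_subtype_compl, Fintype.card_subtype_eq] at rank_le
  exact hM.not_ge rank_le

theorem isHomogeneous_det {A : Matrix ι ι (MvPolynomial σ R)} {d : ι → ℕ}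
    (hA : ∀ i j, (A i j).IsHomogeneous (d i)) : A.det.IsHomogeneous (∑ i, d i) := by
  rw [det_apply']
  refine IsHomogeneous.sum _ _ _ fun π _ ↦ ?_
  rw [← Equiv.sum_comp π d, ← map_intCast (C (R := R) (σ := σ))]
  exact (IsHomogeneous.prod _ _ _ fun i _ ↦ hA (π i) i).C_mul _

theorem isHomogeneous_adjugate {A : Matrix ι ι (MvPolynomial σ R)}
    (hA : ∀ i j, (A i j).IsHomogeneous 1) (i j : ι) :
    (adjugate A i j).IsHomogeneous (Fintype.card ι - 1) := by
  have sum_degrees : ∑ k, (if k = j then 0 else 1) = Fintype.card ι - 1 := by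
    simp [Finset.sum_ite, Finset.filter_ne']
  rw [adjugate_apply, ← sum_degrees]
  refine isHomogeneous_det fun k l ↦ ?_
  split_ifs with hk
  · subst hk
    rw [updateRow_self, Pi.single_apply]
    split_ifs
    exacts [isHomogeneous_one σ R, isHomogeneous_zero σ R 0]
  · rw [updateRow_ne hk]
    exact hA k l

theorem finrank_homogeneousSubmodule [Fintype σ] (d : ℕ) :
    finrank K (homogeneousSubmodule σ K d) = (Fintype.card σ + d - 1).choose d := by
  classical
  have monomials_eq :
      {m : σ →₀ ℕ | m.degree = d} = (Finset.univ.finsuppAntidiag d : Finset (σ →₀ ℕ)) := by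
    ext m
    simp [Finset.mem_finsuppAntidiag, Finsupp.degree_eq_sum]
  rw [homogeneousSubmodule_eq_finsupp_supported]
  change finrank K (restrictSupport K {m : σ →₀ ℕ | m.degree = d}) = _
  rw [finrank_eq_nat_card_basis (basisRestrictSupport K _), monomials_eq, Nat.card_coe_set_eq,
    Set.ncard_coe_finset, Finset.card_finsuppAntidiag_nat_eq_choose, Finset.card_univ]

instance finiteDimensional_homogeneousSubmodule [Finite σ] (d : ℕ) :
    FiniteDimensional K (homogeneousSubmodule σ K d) :=
  Module.Finite.iff_fg.mpr (homogeneousSubmodule_fg σ K d)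

theorem finrank_homogeneousSubmodule_inf_ker_aeval_lt [Finite σ] (d : ℕ) {x : σ → K}
    (hx : x ≠ 0) :
    finrank K ↥(homogeneousSubmodule σ K d ⊓ LinearMap.ker (aeval (R := K) x).toLinearMap) <
      finrank K (homogeneousSubmodule σ K d) := by
  obtain ⟨k, hk⟩ := Function.ne_iff.mp hx
  refine Submodule.finrank_lt_finrank_of_lt (inf_lt_left.mpr fun h ↦ ?_)
  have eval_X_pow : aeval (R := K) x (X k ^ d : MvPolynomial σ K) = 0 := h (isHomogeneous_X_pow k d)
  rw [map_pow, aeval_X] at eval_X_pow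
  exact pow_ne_zero d hk eval_X_pow

/-- The polynomial `tr (S * adj A)`, for a fixed matrix `A` of polynomials, as a linear function of
the constant matrix `S`. It is used to embed the symmetric matrices into a space of forms. -/
def adjugatePairing (A : Matrix ι ι (MvPolynomial σ K)) : Matrix ι ι K →ₗ[K] MvPolynomial σ K :=
  traceLinearMap ι K (MvPolynomial σ K) ∘ₗ LinearMap.mulRight K (adjugate A) ∘ₗ
    (Algebra.linearMap K (MvPolynomial σ K)).mapMatrix

theorem isHomogeneous_adjugatePairing {A : Matrix ι ι (MvPolynomial σ K)}
    (hA : ∀ i j, (A i j).IsHomogeneous 1) (S : Matrix ι ι K) :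
    (adjugatePairing A S).IsHomogeneous (Fintype.card ι - 1) :=
  IsHomogeneous.sum _ _ _ fun i _ ↦ IsHomogeneous.sum _ _ _ fun j _ ↦
    (isHomogeneous_adjugate hA j i).C_mul (S i j)

theorem aeval_adjugatePairing (A : Matrix ι ι (MvPolynomial σ K)) (S : Matrix ι ι K) (x : σ → K) :
    aeval x (adjugatePairing A S) = (S * adjugate (A.map (aeval (R := K) x))).trace := by
  have map_C : (S.map C).map (aeval (R := K) x) = S := by ext; simp
  change aeval x (S.map C * adjugate A).trace = _
  rw [AddMonoidHom.map_trace, Matrix.map_mul, map_C]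
  congr 2
  exact AlgHom.map_adjugate _ A

theorem eq_zero_of_adjugatePairing_eq_zero [NeZero (2 : K)] {A : Matrix ι ι (MvPolynomial σ K)}
    (hspan : symmetricMatrices K ι ≤
      Submodule.span K (Set.range fun x : σ → K ↦ adjugate (A.map (aeval (R := K) x))))
    {S : Matrix ι ι K} (hS : S.IsSymm) (hAS : adjugatePairing A S = 0) : S = 0 := by
  by_contra hS_ne
  obtain ⟨D, hD, trace_D_S, -⟩ := exists_isSymm_trace_mul_ne_zero (p := ⊥) (by simp) hS
    (by simpa using hS_ne)
  have span_le : Submodule.span K (Set.range fun x : σ → K ↦ adjugate (A.map (aeval x))) ≤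
      LinearMap.ker (traceLinearMap ι K K ∘ₗ LinearMap.mulLeft K S) := by
    rw [Submodule.span_le]
    rintro - ⟨x, rfl⟩
    exact (aeval_adjugatePairing A S x).symm.trans (by rw [hAS, map_zero])
  exact trace_D_S ((trace_mul_comm D S).trans (span_le (hspan hD)))

theorem finrank_symmetricMatrices_lt_finrank_homogeneousSubmodule [NeZero (2 : K)] [Finite σ]
    {A : Matrix ι ι (MvPolynomial σ K)} (hA : ∀ i j, (A i j).IsHomogeneous 1)
    (hspan : symmetricMatrices K ι ≤
      Submodule.span K (Set.range fun x : σ → K ↦ adjugate (A.map (aeval (R := K) x))))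
    {x : σ → K} (hx : x ≠ 0) (hAx : adjugate (A.map (aeval (R := K) x)) = 0) :
    finrank K (symmetricMatrices K ι) <
      finrank K (homogeneousSubmodule σ K (Fintype.card ι - 1)) := by
  have pairing_mem (S : symmetricMatrices K ι) : adjugatePairing A S ∈
      homogeneousSubmodule σ K (Fintype.card ι - 1) ⊓
        LinearMap.ker (aeval (R := K) x).toLinearMap :=
    ⟨isHomogeneous_adjugatePairing hA S, by
      change aeval x (adjugatePairing A S) = 0
      rw [aeval_adjugatePairing, hAx, mul_zero, trace_zero]⟩
  have injective : Function.Injective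
      (((adjugatePairing A).domRestrict _).codRestrict _ pairing_mem) := by
    rw [injective_iff_map_eq_zero]
    exact fun S hpair ↦ Subtype.ext <|
      eq_zero_of_adjugatePairing_eq_zero hspan S.2 (congrArg Subtype.val hpair)
  exact (LinearMap.finrank_le_finrank_of_injective injective).trans_lt
    (finrank_homogeneousSubmodule_inf_ker_aeval_lt _ hx)

theorem finrank_symmetricMatrices_lt_of_rank_lt [NeZero (2 : K)] {L : Submodule K (Matrix ι ι K)}
    (hspan : symmetricMatrices K ι ≤ Submodule.span K (adjugate '' (L : Set (Matrix ι ι K))))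
    {M : Matrix ι ι K} (hML : M ∈ L) (hM : M ≠ 0) (hrank : M.rank < Fintype.card ι - 1) :
    finrank K (symmetricMatrices K ι) <
      (finrank K L + (Fintype.card ι - 1) - 1).choose (Fintype.card ι - 1) := by
  let b := finBasis K L
  let B : Fin (finrank K L) → Matrix ι ι K := fun k ↦ b k
  have generic_repr (Y : L) : (genericMatrix B).map (aeval (b.repr Y)) = Y := by
    rw [map_aeval_genericMatrix, ← congrArg Subtype.val (b.sum_repr Y), Submodule.coe_sum]
    rfl
  have image_subset_range : adjugate '' (L : Set (Matrix ι ι K)) ⊆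
      Set.range fun x ↦ adjugate ((genericMatrix B).map (aeval x)) := by
    rintro - ⟨Y, hY, rfl⟩
    exact ⟨b.repr ⟨Y, hY⟩, congrArg adjugate (generic_repr ⟨Y, hY⟩)⟩
  rw [← Fintype.card_fin (finrank K L), ← finrank_homogeneousSubmodule (K := K)]
  refine finrank_symmetricMatrices_lt_finrank_homogeneousSubmodule
    (isHomogeneous_genericMatrix B) (hspan.trans (Submodule.span_mono image_subset_range))
    (x := b.repr ⟨M, hML⟩) ?_ ?_
  · exact fun h ↦ hM <| congrArg Subtype.val <|
      b.repr.map_eq_zero_iff.mp (DFunLike.coe_injective h)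
  · rw [generic_repr, adjugate_eq_zero_of_rank_lt hrank]

end Adjugate

section Net

variable {K ι : Type*} [Field K] [Fintype ι] [DecidableEq ι] {L : Submodule K (Matrix ι ι K)}

theorem span_adjugate_le_symmetricMatrices (hL : ∀ M ∈ L, M.IsSymm) :
    Submodule.span K (adjugate '' (L : Set (Matrix ι ι K))) ≤ symmetricMatrices K ι := by
  rw [Submodule.span_le]
  rintro - ⟨M, hM, rfl⟩
  exact (adjugate_transpose M).trans (congrArg adjugate (hL M hM).eq)

variable [NeZero (2 : K)]

theorem card_sub_one_le_rank_of_symmetricMatrices_le (hdim : finrank K L ≤ 3)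
    (hspan : symmetricMatrices K ι ≤ Submodule.span K (adjugate '' (L : Set (Matrix ι ι K))))
    {M : Matrix ι ι K} (hML : M ∈ L) (hM : M ≠ 0) : Fintype.card ι - 1 ≤ M.rank := by
  by_contra! hrank
  have finrank_lt := finrank_symmetricMatrices_lt_of_rank_lt hspan hML hM hrank
  obtain ⟨d, hd⟩ : ∃ d, Fintype.card ι = d + 1 := Nat.exists_eq_add_one.mpr (by lia)
  rw [finrank_symmetricMatrices, hd, add_tsub_cancel_right] at finrank_lt
  have choose_le : (finrank K L + d - 1).choose d ≤ (d + 1 + 1).choose 2 :=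
    (Nat.choose_le_choose d (by lia)).trans_eq (Nat.choose_symm_add (a := d) (b := 2))
  exact finrank_lt.not_ge choose_le

variable [IsAlgClosed K]

theorem symmetricMatrices_le_span_adjugate (hL : ∀ M ∈ L, M.IsSymm)
    (hreg : ∃ X ∈ L, IsUnit X.det) (hdim : 3 ≤ finrank K L)
    (hrank : ∀ M ∈ L, M ≠ 0 → Fintype.card ι - 1 ≤ M.rank) :
    symmetricMatrices K ι ≤ Submodule.span K (adjugate '' (L : Set (Matrix ι ι K))) := by
  intro S hS
  by_contra hS_notMem
  obtain ⟨D, hD, trace_D_S, trace_D⟩ :=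
    exists_isSymm_trace_mul_ne_zero (span_adjugate_le_symmetricMatrices hL) hS hS_notMem
  have D_eq_zero : D = 0 := eq_zero_of_forall_trace_mul_adjugate_eq_zero hL hreg hdim hrank hD
    fun M hM ↦ trace_D _ (Submodule.subset_span ⟨M, hM, rfl⟩)
  exact trace_D_S (by rw [D_eq_zero, zero_mul, trace_zero])

theorem stmt18_general (hsym : ∀ X ∈ L, X.IsSymm) (hreg : ∃ X ∈ L, IsUnit X.det)
    (hdim : finrank K L = 3) :
    (∀ M ∈ L, M ≠ 0 → Fintype.card ι - 1 ≤ M.rank) ↔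
      Submodule.span K (adjugate '' (L : Set (Matrix ι ι K))) = symmetricMatrices K ι :=
  ⟨fun hrank ↦ (span_adjugate_le_symmetricMatrices hsym).antisymm
      (symmetricMatrices_le_span_adjugate hsym hreg hdim.ge hrank),
    fun hspan _ hML hM ↦
      card_sub_one_le_rank_of_symmetricMatrices_le hdim.le hspan.ge hML hM⟩

end Net

/-- For a regular net `L ⊆ Sⁿ` (`n ≥ 3`), every nonzero matrix in `L` has rank
`≥ n - 1` if and only if the adjugates of the matrices in `L` span all of `Sⁿ`
(equivalently, the linear span of the reciprocal variety `L⁻¹` is all of `Sⁿ`). -/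
theorem stmt18 {n : ℕ} (hn : 3 ≤ n)
    (L : Submodule ℂ (Mat n)) (hsym : ∀ X ∈ L, Matrix.IsSymm X)
    (hreg : ∃ X ∈ L, IsUnit (Matrix.det X))
    (hdim : Module.finrank ℂ L = 3) :
    (∀ M ∈ L, M ≠ 0 → n - 1 ≤ M.rank) ↔
      Submodule.span ℂ (Matrix.adjugate '' (L : Set (Mat n))) = symmSub n := by
  simpa only [Fintype.card_fin] using! stmt18_general hsym hreg hdim
end
end

section
/- Let L ⊆ Sⁿ be a regular linear subspace of dimension m. Then the reciprocal variety L⁻¹ is a linear subspace of Sⁿ if and only if the dimension of the linear span of the adjugates {adj(M) : M ∈ L} is at most m (in which case L⁻¹ equals this span). -/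
/-!
Say that `W` is inverted into `T` if `Z⁻¹ ∈ T` for every invertible `Z ∈ W`. Differentiating
`Z ↦ Z⁻¹` at an invertible `X ∈ W` shows that then `X⁻¹ W X⁻¹ ⊆ T`, so `dim W ≤ dim T`. If moreover
`dim T ≤ dim W`, then `T = X⁻¹ W X⁻¹`; an invertible `K = X⁻¹ Z X⁻¹ ∈ T` has inverse
`K⁻¹ = X Z⁻¹ X`, which lies in `X T X = W` because `Z⁻¹ ∈ T`. So `T` is inverted back into `W`
exactly when `dim T ≤ dim W`.

Let now `S` be the span of the adjugates of `L`. Since the invertible matrices are dense in `L`, `S`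
is the span of `L⁻¹`; hence `L⁻¹` is linear iff it equals `S`. Since they are also dense in `S`,
this holds iff `S` is inverted back into `L`.
-/

open Matrix

noncomputable section

/-- The reciprocal variety of a linear subspace `L` of matrices. -/
def recipVar {n : ℕ} (L : Submodule ℂ (Mat n)) : Set (Mat n) :=
  closure {Y : Mat n | ∃ X ∈ L, IsUnit (Matrix.det X) ∧ Y = X⁻¹}

section Algebra

variable {R ι : Type*} [CommRing R] [Fintype ι] [DecidableEq ι]

/-- A linear space of matrices is regular if it contains an invertible matrix. -/
def IsRegularSubspace (W : Submodule R (Matrix ι ι R)) : Prop :=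
  ∃ X ∈ W, IsUnit X.det

/-- Matrix inversion carries the invertible elements of `W` into `T`. A reciprocal variety `L⁻¹` is
the linear space `T` when this holds both from `L` to `T` and from `T` to `L`. -/
def InvMapsInto (W T : Submodule R (Matrix ι ι R)) : Prop :=
  ∀ ⦃Z⦄, Z ∈ W → IsUnit Z.det → Z⁻¹ ∈ T

/-- The linear span of the adjugates of the elements of `L`, which is the linear span of the
reciprocal variety of `L` when `L` is regular. -/
def adjugateSpan (L : Submodule R (Matrix ι ι R)) : Submodule R (Matrix ι ι R) :=
  Submodule.span R (adjugate '' (L : Set (Matrix ι ι R)))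

/-- The reciprocal variety `L⁻¹` over an arbitrary topological ring, for the entrywise topology on
matrices; `recipVar` is the case of `ℂ`. -/
def reciprocalVariety [TopologicalSpace R] (L : Submodule R (Matrix ι ι R)) :
    Set (Matrix ι ι R) :=
  closure {Y | ∃ X ∈ L, IsUnit X.det ∧ Y = X⁻¹}

variable {W T : Submodule R (Matrix ι ι R)}

theorem inv_mem_of_adjugate_mem {A : Matrix ι ι R} (h : A.adjugate ∈ T) : A⁻¹ ∈ T :=
  A.inv_def ▸ T.smul_mem _ h

theorem inv_mem_iff_adjugate_mem {A : Matrix ι ι R} (hA : IsUnit A.det) :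
    A⁻¹ ∈ T ↔ A.adjugate ∈ T := by
  rw [inv_def, T.smul_mem_iff_of_isUnit hA.ringInverse]

theorem IsRegularSubspace.of_invMapsInto (hW : IsRegularSubspace W) (h : InvMapsInto W T) :
    IsRegularSubspace T :=
  let ⟨X, hX, hXu⟩ := hW
  ⟨X⁻¹, h hX hXu, isUnit_nonsing_inv_det X hXu⟩

theorem invMapsInto_adjugateSpan (L : Submodule R (Matrix ι ι R)) :
    InvMapsInto L (adjugateSpan L) := fun _ hZ _ =>
  inv_mem_of_adjugate_mem (Submodule.subset_span (Set.mem_image_of_mem _ hZ))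

theorem finrank_map_mulLeftRight {A : Type*} [Ring A] [Algebra R A] {a b : A} (ha : IsUnit a)
    (hb : IsUnit b) (V : Submodule R A) :
    Module.finrank R (V.map (LinearMap.mulLeftRight R (a, b))) = Module.finrank R V := by
  have hinj : Function.Injective (LinearMap.mulLeftRight R (a, b)) := fun _ _ h =>
    ha.mul_left_cancel (hb.mul_right_cancel h)
  exact (V.equivMapOfInjective _ hinj).finrank_eq.symm

theorem finite_setOf_det_add_smul_eq_zero [IsDomain R] {E : Matrix ι ι R} (hE : E.det ≠ 0)
    (X : Matrix ι ι R) : {t : R | (X + t • E).det = 0}.Finite := by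
  let p : Polynomial R :=
    det ((Polynomial.X : Polynomial R) • E.map Polynomial.C + X.map Polynomial.C)
  have hp : p ≠ 0 := fun h => hE <| by
    rw [← Polynomial.coeff_det_X_add_C_card E X]
    exact congrArg (Polynomial.coeff · (Fintype.card ι)) h
  have heval (t : R) : p.eval t = (X + t • E).det := by
    rw [← Polynomial.coe_evalRingHom, RingHom.map_det]
    congr 1
    ext i j
    simp [mul_comm (E i j), add_comm]
  simpa only [Polynomial.IsRoot.def, heval] using Polynomial.finite_setOfPred_isRoot hp

end Algebra

section Density

variable {𝕜 ι : Type*} [NontriviallyNormedField 𝕜] [Fintype ι] [DecidableEq ι]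
  {W : Submodule 𝕜 (Matrix ι ι 𝕜)}

theorem IsRegularSubspace.subset_closure_isUnit_det (hW : IsRegularSubspace W) :
    (W : Set (Matrix ι ι 𝕜)) ⊆ closure {Y | Y ∈ W ∧ IsUnit Y.det} := by
  obtain ⟨E, hE, hEu⟩ := hW
  intro X hX
  have hdense : Dense {t : 𝕜 | (X + t • E).det = 0}ᶜ := by
    simpa only [Set.compl_eq_univ_sdiff] using
      dense_univ.sdiff_finite (finite_setOf_det_add_smul_eq_zero hEu.ne_zero X)
  have hline : Continuous fun t : 𝕜 => X + t • E := by fun_prop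
  have hmaps : Set.MapsTo (fun t : 𝕜 => X + t • E) {t | (X + t • E).det = 0}ᶜ
      {Y | Y ∈ W ∧ IsUnit Y.det} := fun t ht =>
    ⟨W.add_mem hX (W.smul_mem t hE), isUnit_iff_ne_zero.mpr ht⟩
  simpa using hmaps.closure hline (hdense 0)

end Density

section Reciprocal

variable {𝕜 ι : Type*} [NontriviallyNormedField 𝕜] [CompleteSpace 𝕜] [Fintype ι] [DecidableEq ι]
  {W T L : Submodule 𝕜 (Matrix ι ι 𝕜)}

theorem isClosed_setOf_adjugate_mem (T : Submodule 𝕜 (Matrix ι ι 𝕜)) :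
    IsClosed {Y : Matrix ι ι 𝕜 | Y.adjugate ∈ T} :=
  T.closed_of_finiteDimensional.preimage continuous_id.matrix_adjugate

-- The resolvent identity `X⁻¹ - (X + t H)⁻¹ = t X⁻¹ H (X + t H)⁻¹` puts `X⁻¹ H (X + t H)⁻¹` in `T`
-- for small `t ≠ 0`; now let `t → 0`.
theorem InvMapsInto.inv_mul_mul_inv_mem (h : InvMapsInto W T) {X H : Matrix ι ι 𝕜} (hX : X ∈ W)
    (hXu : IsUnit X.det) (hH : H ∈ W) : X⁻¹ * H * X⁻¹ ∈ T := by
  have hline : Continuous fun t : 𝕜 => X + t • H := by fun_prop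
  have hlim : Filter.Tendsto (fun t : 𝕜 => X⁻¹ * H * (X + t • H)⁻¹) (nhdsWithin 0 {0}ᶜ)
      (nhds (X⁻¹ * H * X⁻¹)) := by
    have hinv : ContinuousAt Ring.inverse X.det := by
      simpa only [Ring.inverse_eq_inv'] using continuousAt_inv₀ hXu.ne_zero
    have hcont : ContinuousAt (fun t : 𝕜 => X⁻¹ * H * (X + t • H)⁻¹) 0 :=
      continuousAt_const.mul
        ((continuousAt_matrix_inv X hinv).comp_of_eq hline.continuousAt (by simp))
    simpa using hcont.tendsto.mono_left nhdsWithin_le_nhds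
  have hunit : ∀ᶠ t in nhds (0 : 𝕜), (X + t • H).det ≠ 0 :=
    hline.matrix_det.continuousAt.eventually_ne (by simpa using hXu.ne_zero)
  refine T.closed_of_finiteDimensional.mem_of_tendsto hlim ?_
  filter_upwards [hunit.filter_mono nhdsWithin_le_nhds, self_mem_nhdsWithin] with t ht ht0
  have hu : IsUnit (X + t • H).det := isUnit_iff_ne_zero.mpr ht
  have hresolvent : X⁻¹ - (X + t • H)⁻¹ = t • (X⁻¹ * H * (X + t • H)⁻¹) := by
    rw [Matrix.inv_sub_inv (by simp only [isUnit_iff_isUnit_det, hXu, hu]), add_sub_cancel_left,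
      Matrix.mul_smul, smul_mul]
  rw [SetLike.mem_coe, ← T.smul_mem_iff ht0, ← hresolvent]
  exact T.sub_mem (h hX hXu) (h (W.add_mem hX (W.smul_mem t hH)) hu)

theorem InvMapsInto.map_mulLeftRight_le (h : InvMapsInto W T) {X : Matrix ι ι 𝕜} (hX : X ∈ W)
    (hXu : IsUnit X.det) : W.map (LinearMap.mulLeftRight 𝕜 (X⁻¹, X⁻¹)) ≤ T :=
  Submodule.map_le_iff_le_comap.mpr fun _ hH => h.inv_mul_mul_inv_mem hX hXu hH

theorem InvMapsInto.finrank_le (h : InvMapsInto W T) (hW : IsRegularSubspace W) :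
    Module.finrank 𝕜 W ≤ Module.finrank 𝕜 T := by
  obtain ⟨X, hX, hXu⟩ := hW
  have hXi : IsUnit X⁻¹ := (isUnit_iff_isUnit_det _).mpr (isUnit_nonsing_inv_det X hXu)
  rw [← finrank_map_mulLeftRight hXi hXi W]
  exact Submodule.finrank_mono (h.map_mulLeftRight_le hX hXu)

theorem InvMapsInto.map_mulLeftRight_eq (h : InvMapsInto W T)
    (hle : Module.finrank 𝕜 T ≤ Module.finrank 𝕜 W) {X : Matrix ι ι 𝕜} (hX : X ∈ W)
    (hXu : IsUnit X.det) : W.map (LinearMap.mulLeftRight 𝕜 (X⁻¹, X⁻¹)) = T := by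
  have hXi : IsUnit X⁻¹ := (isUnit_iff_isUnit_det _).mpr (isUnit_nonsing_inv_det X hXu)
  exact Submodule.eq_of_le_of_finrank_le (h.map_mulLeftRight_le hX hXu)
    (hle.trans_eq (finrank_map_mulLeftRight hXi hXi W).symm)

theorem InvMapsInto.symm_of_finrank_le (h : InvMapsInto W T) (hW : IsRegularSubspace W)
    (hle : Module.finrank 𝕜 T ≤ Module.finrank 𝕜 W) : InvMapsInto T W := by
  obtain ⟨X, hX, hXu⟩ := hW
  have hT (K : Matrix ι ι 𝕜) : K ∈ T ↔ ∃ Z ∈ W, X⁻¹ * Z * X⁻¹ = K := by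
    rw [← h.map_mulLeftRight_eq hle hX hXu]
    rfl
  intro K hK hKu
  obtain ⟨Z, hZ, rfl⟩ := (hT K).mp hK
  have hZu : IsUnit Z.det := by
    rw [det_mul, det_mul] at hKu
    exact isUnit_of_mul_isUnit_right (isUnit_of_mul_isUnit_left hKu)
  obtain ⟨V, hV, hVZ⟩ := (hT Z⁻¹).mp (h hZ hZu)
  have hinv : (X⁻¹ * Z * X⁻¹)⁻¹ = V := calc
    (X⁻¹ * Z * X⁻¹)⁻¹ = X * Z⁻¹ * X := by
      rw [Matrix.mul_inv_rev, Matrix.mul_inv_rev, nonsing_inv_nonsing_inv X hXu, mul_assoc]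
    _ = X * (X⁻¹ * V * X⁻¹) * X := by rw [hVZ]
    _ = V := by
      rw [mul_assoc X⁻¹, mul_nonsing_inv_cancel_left _ _ hXu, nonsing_inv_mul_cancel_right _ _ hXu]
  rwa [hinv]

theorem InvMapsInto.symm_iff_finrank_le (h : InvMapsInto W T) (hW : IsRegularSubspace W) :
    InvMapsInto T W ↔ Module.finrank 𝕜 T ≤ Module.finrank 𝕜 W :=
  ⟨fun hsymm => hsymm.finrank_le (hW.of_invMapsInto h), h.symm_of_finrank_le hW⟩

theorem reciprocalVariety_subset_iff : reciprocalVariety L ⊆ T ↔ InvMapsInto L T := by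
  rw [reciprocalVariety, T.closed_of_finiteDimensional.closure_subset_iff]
  exact ⟨fun h Z hZ hZu => h ⟨Z, hZ, hZu, rfl⟩, fun h _ ⟨_, hX, hXu, hY⟩ => hY ▸ h hX hXu⟩

theorem subset_reciprocalVariety_iff (hT : IsRegularSubspace T) :
    (T : Set (Matrix ι ι 𝕜)) ⊆ reciprocalVariety L ↔ InvMapsInto T L := by
  constructor
  · intro h K hK _
    refine inv_mem_of_adjugate_mem
      (closure_minimal ?_ (isClosed_setOf_adjugate_mem L) (h hK))
    rintro _ ⟨X, hX, hXu, rfl⟩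
    refine (inv_mem_iff_adjugate_mem (isUnit_nonsing_inv_det X hXu)).mp ?_
    rwa [nonsing_inv_nonsing_inv X hXu]
  · intro h
    refine hT.subset_closure_isUnit_det.trans (closure_mono ?_)
    rintro K ⟨hK, hKu⟩
    exact ⟨K⁻¹, h hK hKu, isUnit_nonsing_inv_det K hKu, (nonsing_inv_nonsing_inv K hKu).symm⟩

theorem adjugateSpan_le_iff (hL : IsRegularSubspace L) : adjugateSpan L ≤ T ↔ InvMapsInto L T := by
  refine ⟨fun h Z hZ hZu => h (invMapsInto_adjugateSpan L hZ hZu), fun h => ?_⟩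
  rw [adjugateSpan, Submodule.span_le, Set.image_subset_iff]
  refine hL.subset_closure_isUnit_det.trans (closure_minimal ?_ (isClosed_setOf_adjugate_mem T))
  rintro Y ⟨hY, hYu⟩
  exact (inv_mem_iff_adjugate_mem hYu).mp (h hY hYu)

theorem span_reciprocalVariety (hL : IsRegularSubspace L) :
    Submodule.span 𝕜 (reciprocalVariety L) = adjugateSpan L :=
  eq_of_forall_ge_iff fun T => by
    rw [Submodule.span_le, reciprocalVariety_subset_iff, adjugateSpan_le_iff hL]

theorem exists_reciprocalVariety_eq_iff (hL : IsRegularSubspace L) :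
    (∃ M : Submodule 𝕜 (Matrix ι ι 𝕜), reciprocalVariety L = M) ↔
      reciprocalVariety L = adjugateSpan L := by
  refine ⟨fun ⟨M, hM⟩ => ?_, fun h => ⟨_, h⟩⟩
  rw [← span_reciprocalVariety hL, hM, Submodule.span_eq]

theorem reciprocalVariety_eq_adjugateSpan_iff (hL : IsRegularSubspace L) :
    reciprocalVariety L = adjugateSpan L ↔
      Module.finrank 𝕜 (adjugateSpan L) ≤ Module.finrank 𝕜 L := by
  have hinv := invMapsInto_adjugateSpan L
  have hsub := reciprocalVariety_subset_iff.mpr hinv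
  rw [← hinv.symm_iff_finrank_le hL, ← subset_reciprocalVariety_iff (hL.of_invMapsInto hinv)]
  exact ⟨fun h => h.ge, hsub.antisymm⟩

theorem stmt19_general (L : Submodule 𝕜 (Matrix ι ι 𝕜)) (hL : IsRegularSubspace L) :
    ((∃ M : Submodule 𝕜 (Matrix ι ι 𝕜), reciprocalVariety L = M) ↔
      Module.finrank 𝕜 (adjugateSpan L) ≤ Module.finrank 𝕜 L) ∧
    ((∃ M : Submodule 𝕜 (Matrix ι ι 𝕜), reciprocalVariety L = M) →
      reciprocalVariety L = adjugateSpan L) :=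
  ⟨(exists_reciprocalVariety_eq_iff hL).trans (reciprocalVariety_eq_adjugateSpan_iff hL),
    (exists_reciprocalVariety_eq_iff hL).mp⟩

end Reciprocal

/-- For a regular `m`-dimensional subspace `L ⊆ Sⁿ`, the reciprocal variety `L⁻¹`
is a linear space if and only if the span of the adjugates `{adj(M) : M ∈ L}` has
dimension at most `m`; in that case `L⁻¹` equals this span. -/
theorem stmt19 {n m : ℕ}
    (L : Submodule ℂ (Mat n)) (hsym : ∀ X ∈ L, Matrix.IsSymm X)
    (hreg : ∃ X ∈ L, IsUnit (Matrix.det X))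
    (hdim : Module.finrank ℂ L = m) :
    ((∃ M : Submodule ℂ (Mat n), recipVar L = (M : Set (Mat n))) ↔
      Module.finrank ℂ
        (Submodule.span ℂ (Matrix.adjugate '' (L : Set (Mat n)))) ≤ m) ∧
    ((∃ M : Submodule ℂ (Mat n), recipVar L = (M : Set (Mat n))) →
      recipVar L =
        (Submodule.span ℂ (Matrix.adjugate '' (L : Set (Mat n))) : Set (Mat n))) := by
  subst hdim
  exact stmt19_general L hreg
end
end
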